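/- Let U ⊆ ℝ be an open set, let m̃ ∈ ℝ, and let p̃ : ℝ → ℝ be three times differentiable on U and satisfy the Painlevé-II equation p̃''(y) - 2 p̃(y)³ - (2/3) y p̃(y) + (2/3) m̃ = 0 for all y ∈ U. Assume D(y) := -3 p̃'(y) + 3 p̃(y)² + y ≠ 0 for all y ∈ U. Then the function p(y) = p̃(y) - (2 m̃ + 1)/D(y) satisfies the Painlevé-II equation with parameter m = -1 - m̃, i.e. p''(y) - 2 p(y)³ - (2/3) y p(y) + (2/3)(-1 - m̃) = 0 for all y ∈ U. -/

import Mathlib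

/-- Bäcklund transformation: if `p̃` solves Painlevé-II with parameter `m̃` on `U` and
`D = -3p̃' + 3p̃² + y` does not vanish on `U`, then `p = p̃ - (2m̃+1)/D` solves
Painlevé-II with parameter `-1 - m̃` on `U`. -/
theorem backlund_neg (U : Set ℝ) (hU : IsOpen U) (mt : ℝ) (pt : ℝ → ℝ)
    (h1 : ∀ y ∈ U, DifferentiableAt ℝ pt y)
    (h2 : ∀ y ∈ U, DifferentiableAt ℝ (deriv pt) y)
    (h3 : ∀ y ∈ U, DifferentiableAt ℝ (deriv (deriv pt)) y)
    (hPII : ∀ y ∈ U,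
      deriv (deriv pt) y - 2 * (pt y) ^ 3 - (2 / 3) * y * pt y + (2 / 3) * mt = 0)
    (hD : ∀ y ∈ U, -3 * deriv pt y + 3 * (pt y) ^ 2 + y ≠ 0) :
    ∀ y ∈ U,
      deriv (deriv (fun t => pt t - (2 * mt + 1) / (-3 * deriv pt t + 3 * (pt t) ^ 2 + t))) y -
          2 * (pt y - (2 * mt + 1) / (-3 * deriv pt y + 3 * (pt y) ^ 2 + y)) ^ 3 -
          (2 / 3) * y * (pt y - (2 * mt + 1) / (-3 * deriv pt y + 3 * (pt y) ^ 2 + y)) +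
          (2 / 3) * (-1 - mt) = 0 := by
  have hu : ∀ y ∈ U, HasDerivAt
      (fun t => (2 * mt + 1) / (-3 * deriv pt t + 3 * (pt t) ^ 2 + t))
      (2 * pt y * ((2 * mt + 1) / (-3 * deriv pt y + 3 * (pt y) ^ 2 + y)) -
        ((2 * mt + 1) / (-3 * deriv pt y + 3 * (pt y) ^ 2 + y)) ^ 2) y := by
    intro y hy
    have hd := ((((h2 y hy).hasDerivAt.const_mul (-3)).add
      (((h1 y hy).hasDerivAt.pow 2).const_mul 3)).add (hasDerivAt_id y))
    have hq := (hasDerivAt_const y (2 * mt + 1)).div hd (hD y hy)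
    refine HasDerivAt.congr_deriv hq ?_
    have e : deriv (deriv pt) y = 2 * (pt y) ^ 3 + (2 / 3) * y * pt y - (2 / 3) * mt := by
      linarith [hPII y hy]
    have h0 := hD y hy
    simp only [Pi.add_apply, Pi.pow_apply, id, e]
    field_simp
    push_cast
    ring
  intro y hy
  have h0 := hD y hy
  have hpp := hPII y hy
  have huy := hu y hy
  have key : deriv (fun t => pt t - (2 * mt + 1) / (-3 * deriv pt t + 3 * (pt t) ^ 2 + t))
      =ᶠ[nhds y] fun t => deriv pt t -
      (2 * pt t * ((2 * mt + 1) / (-3 * deriv pt t + 3 * (pt t) ^ 2 + t)) -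
        ((2 * mt + 1) / (-3 * deriv pt t + 3 * (pt t) ^ 2 + t)) ^ 2) := by
    filter_upwards [hU.mem_nhds hy] with t ht
    exact ((h1 t ht).hasDerivAt.sub (hu t ht)).deriv
  have hfin := (h2 y hy).hasDerivAt.sub
    ((((h1 y hy).hasDerivAt.const_mul 2).mul huy).sub (huy.pow 2))
  have hfin2 := hfin.deriv
  rw [key.deriv_eq]
  refine Eq.trans (congrArg (fun z => z - _ - _ + _) hfin2) ?_
  have hc : (2 * mt + 1) / (-3 * deriv pt y + 3 * (pt y) ^ 2 + y) *
      (-3 * deriv pt y + 3 * (pt y) ^ 2 + y) = 2 * mt + 1 := div_mul_cancel₀ _ h0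
  generalize (2 * mt + 1) / (-3 * deriv pt y + 3 * (pt y) ^ 2 + y) = u at hc ⊢
  push_cast
  linear_combination hpp + (2 / 3) * hc
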